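/- Let k ≥ 2 be an integer and set γ(k) = 2k/(k−1+√(k+1)). For every θ ∈ [0, π/2] there exist positive semidefinite real symmetric 2×2 matrices C_1, C_2, C_3, D_1, D_2, D_3 such that C_1 − kC_2 + C_3 + D_1 − kD_2 + D_3 = diag(1,−k), C_1 + C_2 − kC_3 + D_1 + D_2 − kD_3 = diag(−k,1), C_1 + C_2 + C_3 − D_1 − D_2 − D_3 = X_3(θ), and C_1 + C_2 + C_3 + D_1 + D_2 + D_3 = γ(k)·I_2. -/

import Mathlib

open Matrix

/-- The real symmetric 2×2 matrix `[[cos θ, sin θ],[sin θ, −cos θ]]`. -/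
noncomputable def X3 (θ : ℝ) : Matrix (Fin 2) (Fin 2) ℝ :=
  !![Real.cos θ, Real.sin θ; Real.sin θ, -Real.cos θ]

/-- `γ(k) = 2k/(k−1+√(k+1))`. -/
noncomputable def gammaK (k : ℕ) : ℝ :=
  2 * (k : ℝ) / ((k : ℝ) - 1 + Real.sqrt ((k : ℝ) + 1))

/-!
Put `G i = C i + D i` and `Y i = C i - D i`. The first, second and fourth equations determine the
`G i`, which are diagonal, and it remains to write `X3 θ = ∑ i, Y i` with `-G i ≤ Y i ≤ G i` in the
Loewner order. A traceless symmetric matrix `Z` with entries in the unit disc satisfies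
`-1 ≤ Z ≤ 1`, so conjugating by the square root of `G i` gives admissible summands. The three
off-diagonal entries then add up to that of `X3 θ` with nothing to spare, which is where the value
of `γ(k)` comes from; the diagonal entries are adjusted by shrinking the diagonal of `Z`.
-/

section SymmetricInterval

open Set

lemma smul_mem_Icc_neg_self {R M : Type*} [Semiring R] [Preorder R] [AddCommGroup M] [Preorder M]
    [Module R M] [PosSMulMono R M] {r : R} {y g : M} (hr : 0 ≤ r) (h : y ∈ Icc (-g) g) :
    r • y ∈ Icc (-(r • g)) (r • g) := by
  rw [← smul_neg]
  exact ⟨smul_le_smul_of_nonneg_left h.1 hr, smul_le_smul_of_nonneg_left h.2 hr⟩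

lemma star_conjugate_mem_Icc_neg_self {R : Type*} [Ring R] [PartialOrder R] [StarRing R]
    [StarOrderedRing R] {z : R} (h : z ∈ Icc (-1) 1) (r : R) :
    star r * z * r ∈ Icc (-(star r * r)) (star r * r) := by
  simpa only [mul_neg, mul_one, neg_mul, mem_Icc] using
    And.intro (star_left_conjugate_le_conjugate h.1 r) (star_left_conjugate_le_conjugate h.2 r)

lemma exists_nonneg_add_eq_sub_eq (𝕜 : Type*) {M : Type*} [Field 𝕜] [LinearOrder 𝕜]
    [IsStrictOrderedRing 𝕜] [AddCommGroup M] [PartialOrder M] [IsOrderedAddMonoid M] [Module 𝕜 M]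
    [PosSMulMono 𝕜 M] {y g : M} (h : y ∈ Icc (-g) g) :
    ∃ c d : M, 0 ≤ c ∧ 0 ≤ d ∧ c + d = g ∧ c - d = y := by
  have half_nonneg : (0 : 𝕜) ≤ 1 / 2 := by positivity
  refine ⟨(1 / 2 : 𝕜) • (g + y), (1 / 2 : 𝕜) • (g - y), smul_nonneg half_nonneg ?_,
    smul_nonneg half_nonneg (sub_nonneg.2 h.2), by module, by module⟩
  exact neg_le_iff_add_nonneg'.1 h.1

end SymmetricInterval

lemma quadratic_form_nonneg_of_sq_le_mul {R : Type*} [CommRing R] [LinearOrder R]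
    [IsStrictOrderedRing R] {a b d : R} (ha : 0 ≤ a) (hd : 0 ≤ d) (h : b ^ 2 ≤ a * d) (x y : R) :
    0 ≤ a * x ^ 2 + 2 * b * x * y + d * y ^ 2 := by
  rcases ha.eq_or_lt with rfl | ha
  · obtain rfl : b = 0 := by simpa using h
    simpa using mul_nonneg hd (sq_nonneg y)
  · refine (mul_nonneg_iff_of_pos_left ha).1 ?_
    calc 0 ≤ (a * x + b * y) ^ 2 + (a * d - b ^ 2) * y ^ 2 :=
          add_nonneg (sq_nonneg _) (mul_nonneg (sub_nonneg.2 h) (sq_nonneg y))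
      _ = a * (a * x ^ 2 + 2 * b * x * y + d * y ^ 2) := by ring

lemma two_mul_mul_div_sq_le_one {K : Type*} [Field K] [LinearOrder K] [IsStrictOrderedRing K]
    (p q : K) : (2 * p * q / (p ^ 2 + q ^ 2)) ^ 2 ≤ 1 := by
  rw [div_pow]
  refine div_le_one_of_le₀ ?_ (sq_nonneg _)
  linarith [sq_nonneg (p ^ 2 - q ^ 2)]

lemma two_mul_div_sub_one_add_eq {K : Type*} [Field K] {s : K} (hs : s ≠ 1) :
    2 * (s ^ 2 - 1) / (s ^ 2 - 1 - 1 + s) = 2 * (s + 1) / (s + 2) := by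
  have num_eq : 2 * (s ^ 2 - 1) = 2 * (s + 1) * (s - 1) := by ring
  have den_eq : s ^ 2 - 1 - 1 + s = (s + 2) * (s - 1) := by ring
  rw [num_eq, den_eq, mul_div_mul_right _ _ (sub_ne_zero.2 hs)]

section TwoByTwo

open scoped MatrixOrder

variable {a b d s : ℝ}

lemma posSemidef_fin_two_of_sq_le_mul (ha : 0 ≤ a) (hd : 0 ≤ d) (h : b ^ 2 ≤ a * d) :
    !![a, b; b, d].PosSemidef := by
  refine PosSemidef.of_dotProduct_mulVec_nonneg ?_ fun v => ?_
  · ext i j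
    fin_cases i <;> fin_cases j <;> rfl
  · have expand : star v ⬝ᵥ !![a, b; b, d] *ᵥ v =
        a * v 0 ^ 2 + 2 * b * v 0 * v 1 + d * v 1 ^ 2 := by
      simp [dotProduct, mulVec, Fin.sum_univ_two]
      ring
    exact expand ▸ quadratic_form_nonneg_of_sq_le_mul ha hd h (v 0) (v 1)

lemma traceless_le_one (h : a ^ 2 + b ^ 2 ≤ 1) : !![a, b; b, -a] ≤ 1 := by
  obtain ⟨neg_one_le, le_one⟩ : -1 ≤ a ∧ a ≤ 1 :=
    abs_le.1 <| (sq_le_one_iff_abs_le_one a).1 <| by linarith [sq_nonneg b]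
  have one_sub : 1 - !![a, b; b, -a] = !![1 - a, -b; -b, 1 + a] := by
    simp [one_fin_two]
  rw [le_iff, one_sub]
  exact posSemidef_fin_two_of_sq_le_mul (by linarith) (by linarith) (by linarith)

lemma traceless_mem_Icc (h : a ^ 2 + b ^ 2 ≤ 1) : !![a, b; b, -a] ∈ Set.Icc (-1) 1 := by
  refine ⟨neg_le.1 ?_, traceless_le_one h⟩
  simpa using traceless_le_one (a := -a) (b := -b) (by simpa using h)

lemma scaled_traceless_mem_Icc (h : a ^ 2 + b ^ 2 ≤ 1) (p q : ℝ) :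
    !![p ^ 2 * a, p * q * b; p * q * b, -(q ^ 2 * a)] ∈
      Set.Icc (-diagonal ![p ^ 2, q ^ 2]) (diagonal ![p ^ 2, q ^ 2]) := by
  have conj_one : star (diagonal ![p, q]) * diagonal ![p, q] = diagonal ![p ^ 2, q ^ 2] := by
    ext i j
    fin_cases i <;> fin_cases j <;> simp [star_eq_conjTranspose, sq]
  have conj_traceless : star (diagonal ![p, q]) * !![a, b; b, -a] * diagonal ![p, q] =
      !![p ^ 2 * a, p * q * b; p * q * b, -(q ^ 2 * a)] := by
    ext i j
    fin_cases i <;> fin_cases j <;> simp [star_eq_conjTranspose] <;> ring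
  rw [← conj_one, ← conj_traceless]
  exact star_conjugate_mem_Icc_neg_self (traceless_mem_Icc h) _

/- The diagonal of the contraction is shrunk by the factor `t` because otherwise the diagonal
entries of the sum would carry the factor `p ^ 2 + q ^ 2` instead of `2 * p * q`. -/
lemma exists_traceless_eq_add (h : a ^ 2 + b ^ 2 ≤ 1) (p q : ℝ) :
    ∃ Y ∈ Set.Icc (-diagonal ![p ^ 2, q ^ 2]) (diagonal ![p ^ 2, q ^ 2]),
      ∃ Y' ∈ Set.Icc (-diagonal ![q ^ 2, p ^ 2]) (diagonal ![q ^ 2, p ^ 2]),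
        Y + Y' = (2 * p * q) • !![a, b; b, -a] := by
  set t := 2 * p * q / (p ^ 2 + q ^ 2)
  have t_mul : t * (p ^ 2 + q ^ 2) = 2 * p * q := by
    refine div_mul_cancel_of_imp fun sq_add_sq_eq_zero => ?_
    obtain rfl : p = 0 := by nlinarith
    ring
  have shrunk : (t * a) ^ 2 + b ^ 2 ≤ 1 := by
    have := mul_le_of_le_one_left (sq_nonneg a) (two_mul_mul_div_sq_le_one p q)
    rw [mul_pow]
    linarith
  refine ⟨_, scaled_traceless_mem_Icc shrunk p q, _, scaled_traceless_mem_Icc shrunk q p, ?_⟩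
  have diag : p ^ 2 * (t * a) + q ^ 2 * (t * a) = 2 * p * q * a := by
    linear_combination a * t_mul
  ext i j
  fin_cases i <;> fin_cases j <;> simp <;> linarith

/-- The sums `C i + D i` in the problem with parameter `k = s ^ 2 - 1`, where they are determined by
the first, second and fourth equations. -/
noncomputable def pairSum (s : ℝ) : Fin 3 → Matrix (Fin 2) (Fin 2) ℝ :=
  (s * (s + 2))⁻¹ • ![(s ^ 2 - 2) • 1, diagonal ![1, (s + 1) ^ 2], diagonal ![(s + 1) ^ 2, 1]]

lemma sum_pairSum (hs : 0 < s) : ∑ i, pairSum s i = (2 * (s + 1) / (s + 2)) • 1 := by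
  ext i j
  fin_cases i <;> fin_cases j <;> simp [pairSum, Fin.sum_univ_three] <;> field_simp <;> ring

lemma pairSum_first_equation (hs : 0 < s) :
    pairSum s 0 - (s ^ 2 - 1) • pairSum s 1 + pairSum s 2 = !![1, 0; 0, -(s ^ 2 - 1)] := by
  ext i j
  fin_cases i <;> fin_cases j <;> simp [pairSum] <;> field_simp <;> ring

lemma pairSum_second_equation (hs : 0 < s) :
    pairSum s 0 + pairSum s 1 - (s ^ 2 - 1) • pairSum s 2 = !![-(s ^ 2 - 1), 0; 0, 1] := by
  ext i j
  fin_cases i <;> fin_cases j <;> simp [pairSum] <;> field_simp <;> ring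

lemma exists_mem_Icc_pairSum_sum_eq_traceless (hs : 0 < s) (hs2 : 2 ≤ s ^ 2)
    (h : a ^ 2 + b ^ 2 ≤ 1) :
    ∃ Y : Fin 3 → Matrix (Fin 2) (Fin 2) ℝ,
      (∀ i, Y i ∈ Set.Icc (-pairSum s i) (pairSum s i)) ∧ ∑ i, Y i = !![a, b; b, -a] := by
  obtain ⟨Y₁, hY₁, Y₂, hY₂, add_eq⟩ := exists_traceless_eq_add h 1 (s + 1)
  rw [one_pow] at hY₁ hY₂
  have weight_nonneg : 0 ≤ (s * (s + 2))⁻¹ := by positivity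
  refine ⟨(s * (s + 2))⁻¹ • ![(s ^ 2 - 2) • !![a, b; b, -a], Y₁, Y₂],
    fun i => smul_mem_Icc_neg_self weight_nonneg ?_, ?_⟩
  · fin_cases i
    · exact smul_mem_Icc_neg_self (sub_nonneg.2 hs2) (traceless_mem_Icc h)
    · exact hY₁
    · exact hY₂
  · have total : (s * (s + 2))⁻¹ * (s ^ 2 - 2 + 2 * 1 * (s + 1)) = 1 := by
      field_simp
      ring
    calc _ = (s * (s + 2))⁻¹ • ((s ^ 2 - 2) • !![a, b; b, -a] + (Y₁ + Y₂)) := by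
          simp only [Fin.sum_univ_three, Pi.smul_apply, cons_val, smul_add, add_assoc]
      _ = _ := by rw [add_eq, ← add_smul, smul_smul, total, one_smul]

theorem stmt_3_general {k : ℝ} (hk : 1 ≤ k) (h : a ^ 2 + b ^ 2 ≤ 1) :
    ∃ C D : Fin 3 → Matrix (Fin 2) (Fin 2) ℝ,
      (∀ i, (C i).PosSemidef) ∧ (∀ i, (D i).PosSemidef) ∧
      C 0 - k • C 1 + C 2 + D 0 - k • D 1 + D 2 = !![1, 0; 0, -k] ∧
      C 0 + C 1 - k • C 2 + D 0 + D 1 - k • D 2 = !![-k, 0; 0, 1] ∧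
      C 0 + C 1 + C 2 - D 0 - D 1 - D 2 = !![a, b; b, -a] ∧
      C 0 + C 1 + C 2 + D 0 + D 1 + D 2 = (2 * k / (k - 1 + √(k + 1))) • 1 := by
  obtain ⟨s, one_lt_s, rfl⟩ : ∃ s, 1 < s ∧ k = s ^ 2 - 1 :=
    ⟨√(k + 1), Real.lt_sqrt_of_sq_lt (by linarith), by rw [Real.sq_sqrt (by linarith)]; ring⟩
  have s_pos : 0 < s := by linarith
  obtain ⟨Y, hY, sum_Y⟩ := exists_mem_Icc_pairSum_sum_eq_traceless s_pos (by linarith) h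
  choose C D hC hD hadd hsub using fun i =>
    exists_nonneg_add_eq_sub_eq ℝ (M := Matrix (Fin 2) (Fin 2) ℝ) (hY i)
  have gamma_eq := two_mul_div_sub_one_add_eq one_lt_s.ne'
  refine ⟨C, D, fun i => nonneg_iff_posSemidef.1 (hC i), fun i => nonneg_iff_posSemidef.1 (hD i),
    ?_, ?_, ?_, ?_⟩
  · rw [← pairSum_first_equation s_pos, ← hadd, ← hadd, ← hadd]
    module
  · rw [← pairSum_second_equation s_pos, ← hadd, ← hadd, ← hadd]
    module
  · rw [← sum_Y, Fin.sum_univ_three, ← hsub, ← hsub, ← hsub]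
    abel
  · rw [sub_add_cancel, Real.sqrt_sq s_pos.le, gamma_eq, ← sum_pairSum s_pos, Fin.sum_univ_three,
      ← hadd, ← hadd, ← hadd]
    abel

end TwoByTwo

/-- For every integer `k ≥ 2` and every `θ ∈ [0, π/2]` there exist positive semidefinite real
symmetric 2×2 matrices `C_1, C_2, C_3, D_1, D_2, D_3` satisfying the indicated equations. -/
theorem stmt_3 (k : ℕ) (hk : 2 ≤ k) (θ : ℝ) (hθ : θ ∈ Set.Icc (0 : ℝ) (Real.pi / 2)) :
    ∃ C D : Fin 3 → Matrix (Fin 2) (Fin 2) ℝ,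
      (∀ i, (C i).PosSemidef) ∧ (∀ i, (D i).PosSemidef) ∧
      C 0 - (k : ℝ) • C 1 + C 2 + D 0 - (k : ℝ) • D 1 + D 2 = !![(1 : ℝ), 0; 0, -(k : ℝ)] ∧
      C 0 + C 1 - (k : ℝ) • C 2 + D 0 + D 1 - (k : ℝ) • D 2 = !![-(k : ℝ), 0; 0, 1] ∧
      C 0 + C 1 + C 2 - D 0 - D 1 - D 2 = X3 θ ∧
      C 0 + C 1 + C 2 + D 0 + D 1 + D 2 = gammaK k • (1 : Matrix (Fin 2) (Fin 2) ℝ) :=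
  stmt_3_general (by exact_mod_cast one_le_two.trans hk) (Real.cos_sq_add_sin_sq θ).le
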